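/- arXiv:math/0505153 — 3 statements merged into one kernel-verified Lean document; each statement's English description precedes it below -/
import Mathlib

section
/- Let m ∈ ℝ and σ > 0. The pushforward of the Gaussian measure N(m, σ²) under the absolute value map equals the countable mixture Σ_{i=0}^{∞} α_i(m, σ) ν^{i,(1)}_σ, where α_i(m, σ) = exp(−m²/(2σ²)) (m²/(2σ²))^i / i! (so that α_i(m,σ) ≥ 0 and Σ_i α_i(m,σ) = 1), and ν^{i,(1)}_σ is the probability measure on (0, ∞) with Lebesgue density x ↦ 1_{(x>0)} (2/(σ√(2π))) (x/σ)^{2i}/C_{2i} · exp(−x²/(2σ²)), with C_{2i} = (2i)!/(2^i i!). -/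
/-!
Folding a density `φ` at the origin turns it into `x ↦ φ x + φ (-x)` on `(0, ∞)`. For the density of
`N(m, σ²)`, completing the square gives
`φ x + φ (-x) = 2 / (σ √(2π)) * exp (-m² / (2σ²)) * exp (-x² / (2σ²)) * cosh (m x / σ²)`,
and the terms of the power series of `cosh` are, up to normalization, the mixture components.
-/

open MeasureTheory ProbabilityTheory

/-- The even Gaussian moments `C_{2i} = (2i)!/(2ⁱ i!)`. -/
noncomputable def gaussEvenMoment (i : ℕ) : ℝ :=
  (Nat.factorial (2 * i)) / (2 ^ i * Nat.factorial i)

/-- The probability measure `ν^{i,(1)}_σ` on `(0,∞)` with Lebesgue density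
`x ↦ 1_{(x>0)} (2/(σ√(2π))) (x/σ)^{2i}/C_{2i} exp(−x²/(2σ²))`. -/
noncomputable def nuRadial1 (i : ℕ) (σ : ℝ) : Measure ℝ :=
  volume.withDensity (fun x => ENNReal.ofReal
    (if 0 < x then
      2 / (σ * Real.sqrt (2 * Real.pi)) * (x / σ) ^ (2 * i) / gaussEvenMoment i
        * Real.exp (-x ^ 2 / (2 * σ ^ 2))
    else 0))

/-- The mixture coefficients `α_i(m,σ) = exp(−m²/(2σ²)) (m²/(2σ²))^i / i!`. -/
noncomputable def absGaussCoeff (m σ : ℝ) (i : ℕ) : ℝ :=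
  Real.exp (-m ^ 2 / (2 * σ ^ 2)) * (m ^ 2 / (2 * σ ^ 2)) ^ i / Nat.factorial i

open Set
open scoped ENNReal NNReal

section Folding

variable {G : Type*} [AddCommGroup G] [LinearOrder G] [IsOrderedAddMonoid G] [MeasurableSpace G]
  [TopologicalSpace G] [ClosedIicTopology G] [OpensMeasurableSpace G] [MeasurableNeg G]
  {μ : Measure G} [μ.IsNegInvariant] [NullSingletonClass μ]

theorem setLIntegral_preimage_abs {f : G → ℝ≥0∞} (hf : Measurable f) (s : Set G) :
    ∫⁻ x in abs ⁻¹' s, f x ∂μ = ∫⁻ x in s ∩ Ioi 0, (f x + f (-x)) ∂μ := by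
  have positive_part : abs ⁻¹' s ∩ Ioi 0 = s ∩ Ioi 0 := by
    ext x
    simp +contextual [abs_of_pos]
  have negative_part : (abs ⁻¹' s \ Ioi 0 : Set G) =ᵐ[μ] (Neg.neg ⁻¹' (s ∩ Ioi 0) : Set G) := by
    have neg_side : abs ⁻¹' s ∩ Iio 0 = Neg.neg ⁻¹' (s ∩ Ioi 0) := by
      ext x
      simp +contextual [abs_of_neg]
    rw [sdiff_eq, compl_Ioi, ← neg_side]
    exact (ae_eq_refl _).inter Iio_ae_eq_Iic.symm
  have reflect : ∫⁻ x in Neg.neg ⁻¹' (s ∩ Ioi 0), f x ∂μ = ∫⁻ x in s ∩ Ioi 0, f (-x) ∂μ := by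
    simpa using (Measure.measurePreserving_neg μ).setLIntegral_comp_preimage_emb
      (MeasurableEquiv.neg G).measurableEmbedding (fun x => f (-x)) (s ∩ Ioi 0)
  rw [← lintegral_inter_add_sdiff f _ measurableSet_Ioi, positive_part,
    setLIntegral_congr negative_part, reflect, lintegral_add_left hf]

theorem map_abs_withDensity [MeasurableSup₂ G] {f : G → ℝ≥0∞} (hf : Measurable f) :
    (μ.withDensity f).map abs = (μ.restrict (Ioi 0)).withDensity (fun x => f x + f (-x)) := by
  ext s hs
  rw [Measure.map_apply measurable_abs hs, withDensity_apply _ (measurable_abs hs),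
    withDensity_apply _ hs, Measure.restrict_restrict hs, setLIntegral_preimage_abs hf]

end Folding

theorem sum_smul_withDensity_ofReal {α ι : Type*} [MeasurableSpace α] [Countable ι]
    {μ : Measure α} {a : ι → ℝ} {p : ι → α → ℝ} {q : α → ℝ} (ha : ∀ i, 0 ≤ a i)
    (hp_meas : ∀ i, Measurable (p i)) (hp : ∀ᵐ x ∂μ, ∀ i, 0 ≤ p i x)
    (hq : ∀ᵐ x ∂μ, HasSum (fun i => a i * p i x) (q x)) :
    Measure.sum (fun i => ENNReal.ofReal (a i) • μ.withDensity (fun x => ENNReal.ofReal (p i x))) =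
      μ.withDensity (fun x => ENNReal.ofReal (q x)) := by
  have hsmul (i : ι) : ENNReal.ofReal (a i) • μ.withDensity (fun x => ENNReal.ofReal (p i x)) =
      μ.withDensity (fun x => ENNReal.ofReal (a i * p i x)) := by
    rw [← withDensity_smul _ (hp_meas i).ennreal_ofReal]
    simp only [ENNReal.ofReal_mul (ha i)]
    rfl
  simp_rw [hsmul]
  rw [← withDensity_tsum fun i => ((hp_meas i).const_mul (a i)).ennreal_ofReal]
  refine withDensity_congr_ae ?_
  filter_upwards [hp, hq] with x hpx hqx
  rw [tsum_apply (Pi.summable.2 fun _ => ENNReal.summable), ← hqx.tsum_eq,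
    ENNReal.ofReal_tsum_of_nonneg (fun i => mul_nonneg (ha i) (hpx i)) hqx.summable]

theorem gaussianPDFReal_add_gaussianPDFReal_neg (m : ℝ) (v : ℝ≥0) (x : ℝ) :
    gaussianPDFReal m v x + gaussianPDFReal m v (-x) =
      2 / √(2 * Real.pi * v) * (Real.exp (-m ^ 2 / (2 * v)) * Real.exp (-x ^ 2 / (2 * v))) *
        Real.cosh (m * x / v) := by
  have complete_square (y : ℝ) : Real.exp (-(y - m) ^ 2 / (2 * v)) =
      Real.exp (-m ^ 2 / (2 * v)) * Real.exp (-y ^ 2 / (2 * v)) * Real.exp (m * y / v) := by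
    rw [← Real.exp_add, ← Real.exp_add]
    ring_nf
  rw [gaussianPDFReal, gaussianPDFReal, complete_square, complete_square, Real.cosh_eq, neg_sq,
    mul_neg, neg_div (v : ℝ)]
  ring

theorem map_abs_gaussianReal (m : ℝ) {v : ℝ≥0} (hv : v ≠ 0) :
    (gaussianReal m v).map abs = (volume.restrict (Ioi 0)).withDensity
      (fun x => ENNReal.ofReal (gaussianPDFReal m v x + gaussianPDFReal m v (-x))) := by
  rw [gaussianReal_of_var_ne_zero m hv,
    map_abs_withDensity (measurable_gaussianPDF m v)]
  simp only [gaussianPDF, ENNReal.ofReal_add, gaussianPDFReal_nonneg]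

/-- The density of `nuRadial1 i σ` on `(0, ∞)`, extended to an even function on all of `ℝ`. -/
noncomputable def radialPDFReal (i : ℕ) (σ x : ℝ) : ℝ :=
  2 / (σ * √(2 * Real.pi)) * (x / σ) ^ (2 * i) / gaussEvenMoment i *
    Real.exp (-x ^ 2 / (2 * σ ^ 2))

theorem gaussEvenMoment_pos (i : ℕ) : 0 < gaussEvenMoment i := by
  unfold gaussEvenMoment
  positivity

theorem radialPDFReal_nonneg (i : ℕ) {σ : ℝ} (hσ : 0 ≤ σ) (x : ℝ) : 0 ≤ radialPDFReal i σ x := by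
  have := gaussEvenMoment_pos i
  have : 0 ≤ (x / σ) ^ (2 * i) := (even_two_mul i).pow_nonneg _
  unfold radialPDFReal
  positivity

theorem measurable_radialPDFReal (i : ℕ) (σ : ℝ) : Measurable (radialPDFReal i σ) := by
  unfold radialPDFReal
  fun_prop

theorem nuRadial1_eq_withDensity_restrict (i : ℕ) (σ : ℝ) :
    nuRadial1 i σ = (volume.restrict (Ioi 0)).withDensity
      (fun x => ENNReal.ofReal (radialPDFReal i σ x)) := by
  rw [← withDensity_indicator measurableSet_Ioi, nuRadial1]
  congr 1 with x
  by_cases hx : 0 < x <;> simp [hx, radialPDFReal]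

theorem absGaussCoeff_nonneg (m σ : ℝ) (i : ℕ) : 0 ≤ absGaussCoeff m σ i := by
  unfold absGaussCoeff
  positivity

theorem hasSum_absGaussCoeff (m σ : ℝ) : HasSum (absGaussCoeff m σ) 1 := by
  have poisson := hasSum_one_poissonMeasure (m ^ 2 / (2 * σ ^ 2)).toNNReal
  rw [Real.coe_toNNReal _ (by positivity), ← neg_div] at poisson
  exact poisson

theorem absGaussCoeff_mul_radialPDFReal (m σ x : ℝ) (i : ℕ) :
    absGaussCoeff m σ i * radialPDFReal i σ x =
      2 / (σ * √(2 * Real.pi)) *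
        (Real.exp (-m ^ 2 / (2 * σ ^ 2)) * Real.exp (-x ^ 2 / (2 * σ ^ 2))) *
          ((m * x / σ ^ 2) ^ (2 * i) / (2 * i).factorial) := by
  have split_pow : (m * x / σ ^ 2) ^ (2 * i) =
      (m ^ 2 / (2 * σ ^ 2)) ^ i * (x / σ) ^ (2 * i) * 2 ^ i := by
    rw [pow_mul, pow_mul, ← mul_pow, ← mul_pow]
    ring
  rw [split_pow, absGaussCoeff, radialPDFReal, gaussEvenMoment]
  have hfact : (i.factorial : ℝ) ≠ 0 := by positivity
  field_simp

theorem hasSum_absGaussCoeff_mul_radialPDFReal (m : ℝ) {σ : ℝ} (hσ : 0 ≤ σ) (x : ℝ) :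
    HasSum (fun i => absGaussCoeff m σ i * radialPDFReal i σ x)
      (gaussianPDFReal m (σ ^ 2).toNNReal x + gaussianPDFReal m (σ ^ 2).toNNReal (-x)) := by
  have hsqrt : √(2 * Real.pi * σ ^ 2) = σ * √(2 * Real.pi) := by
    rw [Real.sqrt_mul (by positivity), Real.sqrt_sq hσ, mul_comm]
  rw [gaussianPDFReal_add_gaussianPDFReal_neg, Real.coe_toNNReal _ (sq_nonneg σ), hsqrt]
  simp_rw [absGaussCoeff_mul_radialPDFReal]
  exact (Real.hasSum_cosh _).mul_left _

/-- The law of `|X|` for `X ∼ N(m, σ²)` is the countable mixture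
`∑ᵢ αᵢ(m,σ) ν^{i,(1)}_σ`, where the coefficients `αᵢ(m,σ)` are nonnegative
and sum to `1`. -/
theorem abs_gaussian_as_mixture (m σ : ℝ) (hσ : 0 < σ) :
    Measure.map (fun t => |t|) (gaussianReal m (Real.toNNReal (σ ^ 2)))
      = Measure.sum (fun i => ENNReal.ofReal (absGaussCoeff m σ i) • nuRadial1 i σ) ∧
    (∀ i, 0 ≤ absGaussCoeff m σ i) ∧
    (∑' i, absGaussCoeff m σ i) = 1 := by
  refine ⟨?_, absGaussCoeff_nonneg m σ, (hasSum_absGaussCoeff m σ).tsum_eq⟩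
  have hv : (σ ^ 2).toNNReal ≠ 0 := (Real.toNNReal_pos.2 (pow_pos hσ 2)).ne'
  simp_rw [nuRadial1_eq_withDensity_restrict]
  rw [sum_smul_withDensity_ofReal (absGaussCoeff_nonneg m σ)
    (fun i => measurable_radialPDFReal i σ)
    (.of_forall fun x i => radialPDFReal_nonneg i hσ.le x)
    (.of_forall (hasSum_absGaussCoeff_mul_radialPDFReal m hσ.le))]
  exact map_abs_gaussianReal m hv
end

section
/- Let δ ≥ 1 be real, a ∈ ℝ, β > 0, σ > 0, i ∈ ℕ and x' > 0. Define g_k^{(δ)}(u) = 1_{(u>0)} (2/√(2π)) u^{δ−1+2k}/C_{δ−1+2k} · e^{−u²/2} (where C_α = ∫_ℝ |v|^α (2π)^{−1/2} e^{−v²/2} dv), and define the kernel p^{(δ)}(x, x') = 1_{(x'>0)} (2/(β√(2π))) e^{−x'²/(2β²)} Σ_{k=0}^{∞} α_k(x) x'^{δ−1+2k}/(C_{δ−1+2k} β^{δ−1+2k}), with α_k(x) = e^{−a²x²/(2β²)} (a²x²/(2β²))^k / k!. Set τ² = β² + a²σ². Then ∫_0^∞ (1/σ) g_i^{(δ)}(x/σ)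 · p^{(δ)}(x, x') dx = Σ_{k=0}^{i} binom(i,k) (1 − β²/τ²)^k (β²/τ²)^{i−k} · (1/τ) g_k^{(δ)}(x'/τ). -/
open MeasureTheory

/-- `C_α = ∫ |v|^α (2π)^{−1/2} e^{−v²/2} dv`, the `α`-th absolute moment of a
standard Gaussian. -/
noncomputable def gaussAbsMoment (α : ℝ) : ℝ :=
  ∫ v : ℝ, |v| ^ α * (Real.sqrt (2 * Real.pi))⁻¹ * Real.exp (-v ^ 2 / 2)

/-- The density `g_k^{(δ)}(u) = 1_{(u>0)} (2/√(2π)) u^{δ−1+2k}/C_{δ−1+2k} e^{−u²/2}`. -/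
noncomputable def gRadial (δ : ℝ) (k : ℕ) (u : ℝ) : ℝ :=
  if 0 < u then
    2 / Real.sqrt (2 * Real.pi) * u ^ (δ - 1 + 2 * (k : ℝ))
      / gaussAbsMoment (δ - 1 + 2 * (k : ℝ)) * Real.exp (-u ^ 2 / 2)
  else 0

/-- The transition density of the sampled `δ`-dimensional radial
Ornstein–Uhlenbeck process,
`p^{(δ)}(x,x') = 1_{(x'>0)} (2/(β√(2π))) e^{−x'²/(2β²)}
  ∑ₖ α_k(x) x'^{δ−1+2k}/(C_{δ−1+2k} β^{δ−1+2k})` with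
`α_k(x) = e^{−a²x²/(2β²)} (a²x²/(2β²))^k/k!`. -/
noncomputable def radialOUKernel (δ a β : ℝ) (x x' : ℝ) : ℝ :=
  if 0 < x' then
    2 / (β * Real.sqrt (2 * Real.pi)) * Real.exp (-x' ^ 2 / (2 * β ^ 2))
      * ∑' k : ℕ,
          (Real.exp (-(a ^ 2 * x ^ 2) / (2 * β ^ 2))
              * (a ^ 2 * x ^ 2 / (2 * β ^ 2)) ^ k / Nat.factorial k)
            * x' ^ (δ - 1 + 2 * (k : ℝ))
            / (gaussAbsMoment (δ - 1 + 2 * (k : ℝ)) * β ^ (δ - 1 + 2 * (k : ℝ)))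
  else 0

/-!
If `G ∼ Gamma(a, r)` and, given `G`, `N` is Poisson with parameter `l G`, then `N` is negative
binomial with parameters `a` and `p = r / (r + l)`. After the substitution `y = x²` the integral is
therefore a negative binomial mixture of the laws of `√Gamma(δ/2 + n, 1/(2β²))`. Such a mixture
collapses to a finite one: Chu–Vandermonde expands `Γ(s + i + n) / Γ(s + n)` in falling factorials
of `n`, the Poisson factorial moments sum each of them, and the resulting factor `exp z` lowers the
rate from `1/(2β²)` to `p/(2β²) = 1/(2τ²)`.
-/

open Finset Polynomial ProbabilityTheory Set

theorem hasSum_descFactorial_mul_pow_div_factorial (z : ℝ) (k : ℕ) :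
    HasSum (fun n : ℕ => (n.descFactorial k : ℝ) * (z ^ n / n.factorial)) (z ^ k * Real.exp z) := by
  have vanish : ∑ n ∈ range k, (n.descFactorial k : ℝ) * (z ^ n / n.factorial) = 0 :=
    sum_eq_zero fun n hn => by simp [Nat.descFactorial_of_lt (mem_range.mp hn)]
  have shift (n : ℕ) : ((n + k).descFactorial k : ℝ) * (z ^ (n + k) / (n + k).factorial)
      = z ^ k * (z ^ n / n.factorial) := by
    have h : ((n + k).factorial : ℝ) = n.factorial * (n + k).descFactorial k := by
      exact_mod_cast (by simpa using (Nat.factorial_mul_descFactorial (Nat.le_add_left k n)).symm)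
    rw [h, pow_add]
    field_simp
  rw [← hasSum_nat_add_iff' k, vanish, sub_zero, Real.exp_eq_exp_ℝ]
  simpa only [shift] using (NormedSpace.expSeries_div_hasSum_exp z).mul_left (z ^ k)

theorem ascPochhammer_eval_eq_Gamma_div_Gamma {s : ℝ} (hs : ∀ m : ℕ, s ≠ -m) (n : ℕ) :
    (ascPochhammer ℝ n).eval s = Real.Gamma (s + n) / Real.Gamma s := by
  induction n with
  | zero => simp [Real.Gamma_ne_zero hs]
  | succ n ih =>
    have hsn : s + n ≠ 0 := fun h => hs n (by linarith)
    rw [ascPochhammer_succ_eval, ih, Nat.cast_add_one, ← add_assoc, Real.Gamma_add_one hsn]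
    ring

theorem Gamma_add_div_Gamma_eq_sum_descFactorial {s : ℝ} (hs : ∀ m : ℕ, s ≠ -m) (i n : ℕ) :
    Real.Gamma (s + i + n) / Real.Gamma (s + n)
      = ∑ k ∈ range (i + 1),
          (i.choose k : ℝ) * n.descFactorial k * (Real.Gamma (s + i) / Real.Gamma (s + k)) := by
  have hs_add (k m : ℕ) : s + k ≠ -m := fun h => hs (k + m) (by push_cast; linarith)
  have Gamma_ratio (k j : ℕ) : (descPochhammer ℤ j).smeval (s + k + j - 1)
      = Real.Gamma (s + k + j) / Real.Gamma (s + k) := by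
    rw [descPochhammer_smeval_eq_ascPochhammer, ascPochhammer_smeval_eq_eval,
      ← ascPochhammer_eval_eq_Gamma_div_Gamma (hs_add k)]
    congr 1
    ring
  calc Real.Gamma (s + i + n) / Real.Gamma (s + n)
      = (descPochhammer ℤ i).smeval ((n : ℝ) + (s + i - 1)) := by
        rw [add_right_comm, ← Gamma_ratio]
        congr 1
        ring
    _ = ∑ k ∈ range (i + 1), (i.choose k : ℝ) * ((descPochhammer ℤ k).smeval (n : ℝ)
          * (descPochhammer ℤ (i - k)).smeval (s + i - 1)) := by
        rw [Ring.descPochhammer_smeval_add i (Commute.all _ _),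
          Nat.sum_antidiagonal_eq_sum_range_succ_mk]
    _ = _ := sum_congr rfl fun k hk => by
        have hki : (i : ℝ) = k + (i - k : ℕ) := by
          exact_mod_cast (Nat.add_sub_cancel' (mem_range_succ_iff.mp hk)).symm
        rw [descPochhammer_smeval_eq_descFactorial, hki, ← add_assoc, Gamma_ratio, mul_assoc]

theorem hasSum_Gamma_add_div_Gamma_mul_pow_div_factorial {s : ℝ} (hs : ∀ m : ℕ, s ≠ -m)
    (i : ℕ) (z : ℝ) :
    HasSum (fun n : ℕ => Real.Gamma (s + i + n) / Real.Gamma (s + n) * (z ^ n / n.factorial))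
      (∑ k ∈ range (i + 1),
        (i.choose k : ℝ) * (Real.Gamma (s + i) / Real.Gamma (s + k)) * (z ^ k * Real.exp z)) := by
  convert! hasSum_sum fun k (_ : k ∈ range (i + 1)) =>
    (hasSum_descFactorial_mul_pow_div_factorial z k).mul_left
      ((i.choose k : ℝ) * (Real.Gamma (s + i) / Real.Gamma (s + k))) using 2 with n
  rw [Gamma_add_div_Gamma_eq_sum_descFactorial hs, sum_mul]
  exact sum_congr rfl fun k _ => by ring

/-- The Poisson probability `e^{-μ} μⁿ / n!`, for a real parameter `μ` (Mathlib's `poissonMeasure`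
takes its parameter in `ℝ≥0`); with `μ = a²x²/(2β²)` it is the weight `α_n(x)`. -/
noncomputable def poissonWeight (μ : ℝ) (n : ℕ) : ℝ :=
  Real.exp (-μ) * μ ^ n / n.factorial

/-- The negative binomial probability of `n` failures before the `a`-th success, for a real number
`a` of successes of probability `p`; it is the law of a Poisson variable with Gamma parameter. -/
noncomputable def negBinomialWeight (a p : ℝ) (n : ℕ) : ℝ :=
  Real.Gamma (a + n) / (Real.Gamma a * n.factorial) * p ^ a * (1 - p) ^ n

/-- The density of `√G` for `G ∼ Gamma(a, r)`, with `r` the rate; `ν^{i,(δ)}_σ` is the case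
`a = δ/2 + i`, `r = 1/(2σ²)`. -/
noncomputable def sqrtGammaPDFReal (a r x : ℝ) : ℝ :=
  if 0 < x then 2 * x * gammaPDFReal a r (x ^ 2) else 0

theorem gammaPDFReal_of_pos (a r : ℝ) {x : ℝ} (hx : 0 < x) :
    gammaPDFReal a r x = r ^ a / Real.Gamma a * x ^ (a - 1) * Real.exp (-(r * x)) :=
  if_pos hx.le

theorem integral_Ioi_gammaPDFReal {a r : ℝ} (ha : 0 < a) (hr : 0 < r) :
    ∫ x in Ioi 0, gammaPDFReal a r x = 1 := by
  rw [setIntegral_congr_fun measurableSet_Ioi fun x hx => gammaPDFReal_of_pos a r hx]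
  simp only [mul_assoc]
  rw [integral_const_mul, Real.integral_rpow_mul_exp_neg_mul_Ioi ha hr, one_div,
    Real.inv_rpow hr.le]
  field_simp

theorem mul_gammaPDFReal_mul {c r : ℝ} (hc : 0 < c) (hr : 0 ≤ r) (a x : ℝ) :
    c * gammaPDFReal a r (c * x) = gammaPDFReal a (c * r) x := by
  unfold gammaPDFReal
  by_cases hx : 0 ≤ x
  · rw [if_pos (by positivity), if_pos hx, Real.mul_rpow hc.le hx, Real.mul_rpow hc.le hr,
      Real.rpow_sub_one hc.ne']
    field_simp
  · rw [if_neg (by simpa [mul_nonneg_iff_of_pos_left hc] using hx), if_neg hx, mul_zero]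

theorem poissonWeight_mul_gammaPDFReal {a r l y : ℝ} (ha : 0 < a) (hr : 0 < r) (hl : 0 ≤ l)
    (hy : 0 < y) (n : ℕ) :
    poissonWeight (l * y) n * gammaPDFReal a r y
      = negBinomialWeight a (r / (r + l)) n * gammaPDFReal (a + n) (r + l) y := by
  have hrl : 0 < r + l := by positivity
  have hexp : Real.exp (-((r + l) * y)) = Real.exp (-(l * y)) * Real.exp (-(r * y)) := by
    rw [← Real.exp_add]
    ring_nf
  have hfail : 1 - r / (r + l) = l / (r + l) := by
    field_simp
    ring
  rw [poissonWeight, negBinomialWeight, gammaPDFReal_of_pos _ _ hy, gammaPDFReal_of_pos _ _ hy,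
    hexp, hfail, add_sub_right_comm, Real.rpow_add_natCast hy.ne', Real.rpow_add_natCast hrl.ne',
    Real.div_rpow hr.le hrl.le, mul_pow l, div_pow l]
  field_simp

theorem integral_gammaPDFReal_mul_tsum_poissonWeight {a r l S : ℝ} {c : ℕ → ℝ} (ha : 0 < a)
    (hr : 0 < r) (hl : 0 ≤ l)
    (hS : HasSum (fun n => negBinomialWeight a (r / (r + l)) n * c n) S) :
    ∫ y in Ioi 0, gammaPDFReal a r y * ∑' n, poissonWeight (l * y) n * c n = S := by
  set w : ℕ → ℝ := fun n => negBinomialWeight a (r / (r + l)) n * c n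
  have hrl : 0 < r + l := by positivity
  have integral_one (n : ℕ) : ∫ y in Ioi 0, gammaPDFReal (a + n) (r + l) y = 1 :=
    integral_Ioi_gammaPDFReal (by positivity) hrl
  have integrable (n : ℕ) : IntegrableOn (fun y => w n * gammaPDFReal (a + n) (r + l) y) (Ioi 0) :=
    (integrable_of_integral_eq_one (integral_one n)).const_mul _
  have integral_norm (n : ℕ) :
      ∫ y in Ioi 0, ‖w n * gammaPDFReal (a + n) (r + l) y‖ = ‖w n‖ := by
    have hnonneg := gammaPDFReal_nonneg (a := a + n) (by positivity) hrl
    simp only [norm_mul, Real.norm_of_nonneg (hnonneg _), integral_const_mul, integral_one, mul_one]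
  calc ∫ y in Ioi 0, gammaPDFReal a r y * ∑' n, poissonWeight (l * y) n * c n
      = ∫ y in Ioi 0, ∑' n, w n * gammaPDFReal (a + n) (r + l) y :=
        setIntegral_congr_fun measurableSet_Ioi fun y hy => by
          simp only [← tsum_mul_left]
          refine tsum_congr fun n => ?_
          rw [← mul_assoc, mul_comm (gammaPDFReal a r y),
            poissonWeight_mul_gammaPDFReal ha hr hl hy, mul_right_comm]
    _ = ∑' n, ∫ y in Ioi 0, w n * gammaPDFReal (a + n) (r + l) y :=
        (integral_tsum_of_summable_integral_norm integrable
          (by simpa only [integral_norm] using hS.summable.norm)).symm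
    _ = S := by simp only [integral_const_mul, integral_one, mul_one, hS.tsum_eq]

theorem hasSum_negBinomialWeight_mul_gammaPDFReal {s p r y : ℝ} (hs : 0 < s) (hp : 0 < p)
    (hr : 0 < r) (hy : 0 < y) (i : ℕ) :
    HasSum (fun n => negBinomialWeight (s + i) p n * gammaPDFReal (s + n) r y)
      (∑ k ∈ range (i + 1),
        (i.choose k : ℝ) * (1 - p) ^ k * p ^ (i - k) * gammaPDFReal (s + k) (p * r) y) := by
  have hs' (m : ℕ) : s ≠ -m := by linarith [m.cast_nonneg (α := ℝ)]
  have hexp : Real.exp (-(p * r * y)) = Real.exp (-(r * y)) * Real.exp ((1 - p) * (r * y)) := by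
    rw [← Real.exp_add]
    ring_nf
  have gammaPDF_add (n : ℕ) (r : ℝ) (hr : 0 < r) : gammaPDFReal (s + n) r y
      = r ^ s * y ^ (s - 1) * (r * y) ^ n * Real.exp (-(r * y)) / Real.Gamma (s + n) := by
    rw [gammaPDFReal_of_pos _ _ hy, add_sub_right_comm, Real.rpow_add_natCast hy.ne',
      Real.rpow_add_natCast hr.ne', mul_pow]
    ring
  convert! (hasSum_Gamma_add_div_Gamma_mul_pow_div_factorial hs' i ((1 - p) * (r * y))).mul_left
    (p ^ (s + i) / Real.Gamma (s + i) * (r ^ s * y ^ (s - 1) * Real.exp (-(r * y)))) using 1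
  · funext n
    rw [negBinomialWeight, gammaPDF_add n r hr, mul_pow (1 - p)]
    ring
  · rw [mul_sum]
    refine sum_congr rfl fun k hk => ?_
    have hpow : p ^ i = p ^ (i - k) * p ^ k :=
      (pow_sub_mul_pow p (mem_range_succ_iff.mp hk)).symm
    rw [gammaPDF_add k (p * r) (by positivity), hexp, Real.mul_rpow hp.le hr.le,
      Real.rpow_add_natCast hp.ne', hpow, mul_pow (1 - p), mul_assoc p r y, mul_pow p]
    field_simp

theorem hasSum_negBinomialWeight_mul_sqrtGammaPDFReal {s p r : ℝ} (hs : 0 < s) (hp : 0 < p)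
    (hr : 0 < r) (i : ℕ) (x : ℝ) :
    HasSum (fun n => negBinomialWeight (s + i) p n * sqrtGammaPDFReal (s + n) r x)
      (∑ k ∈ range (i + 1),
        (i.choose k : ℝ) * (1 - p) ^ k * p ^ (i - k) * sqrtGammaPDFReal (s + k) (p * r) x) := by
  unfold sqrtGammaPDFReal
  by_cases hx : 0 < x
  · simpa only [if_pos hx, mul_left_comm _ (2 * x), mul_sum] using
      (hasSum_negBinomialWeight_mul_gammaPDFReal hs hp hr (pow_pos hx 2) i).mul_left (2 * x)
  · simpa only [if_neg hx, mul_zero, sum_const_zero] using hasSum_zero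

theorem integral_sqrtGammaPDFReal_mul_comp_sq (a r : ℝ) (f : ℝ → ℝ) :
    ∫ x in Ioi 0, sqrtGammaPDFReal a r x * f (x ^ 2) = ∫ y in Ioi 0, gammaPDFReal a r y * f y := by
  rw [← integral_comp_rpow_Ioi_of_pos (g := fun y => gammaPDFReal a r y * f y) two_pos]
  refine setIntegral_congr_fun measurableSet_Ioi fun x hx => ?_
  have hderiv : x ^ (2 - 1 : ℝ) = x := by norm_num
  simp only [sqrtGammaPDFReal, if_pos (mem_Ioi.mp hx), Real.rpow_two, smul_eq_mul, hderiv,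
    mul_assoc]

theorem one_div_mul_sqrtGammaPDFReal_div {σ r : ℝ} (hσ : 0 < σ) (hr : 0 ≤ r) (a x : ℝ) :
    1 / σ * sqrtGammaPDFReal a r (x / σ) = sqrtGammaPDFReal a (r / σ ^ 2) x := by
  have hsq : (x / σ) ^ 2 = 1 / σ ^ 2 * x ^ 2 := by ring
  have hrate : r / σ ^ 2 = 1 / σ ^ 2 * r := by ring
  simp only [sqrtGammaPDFReal, div_pos_iff_of_pos_right hσ]
  split_ifs
  · rw [hsq, hrate, ← mul_gammaPDFReal_mul (by positivity) hr]
    ring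
  · exact mul_zero _

theorem gaussAbsMoment_eq {α : ℝ} (hα : -1 < α) :
    gaussAbsMoment α = 2 ^ (α / 2) * Real.Gamma ((α + 1) / 2) / √Real.pi := by
  have half_line : ∫ v in Ioi 0, v ^ α * (√(2 * Real.pi))⁻¹ * Real.exp (-v ^ 2 / 2)
      = (√(2 * Real.pi))⁻¹ * (2 ^ ((α + 1) / 2) / 2 * Real.Gamma ((α + 1) / 2)) := by
    have h := integral_rpow_mul_exp_neg_mul_rpow two_pos hα one_half_pos
    have hpow : (1 / 2 : ℝ) ^ (-(α + 1) / 2) = 2 ^ ((α + 1) / 2) := by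
      rw [one_div, Real.inv_rpow two_pos.le, neg_div, Real.rpow_neg two_pos.le, inv_inv]
    rw [hpow, mul_one_div] at h
    rw [← h, ← integral_const_mul]
    refine setIntegral_congr_fun measurableSet_Ioi fun v _ => ?_
    simp only [Real.rpow_two]
    ring_nf
  have hpow : (2 : ℝ) ^ ((α + 1) / 2) = 2 ^ (α / 2) * √2 := by
    rw [Real.sqrt_eq_rpow, ← Real.rpow_add two_pos, add_div]
  have even := integral_comp_abs
    (f := fun v => v ^ α * (√(2 * Real.pi))⁻¹ * Real.exp (-v ^ 2 / 2))
  simp only [sq_abs] at even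
  rw [gaussAbsMoment, even, half_line, hpow, Real.sqrt_mul two_pos.le]
  field_simp

theorem gRadial_eq_sqrtGammaPDFReal {δ : ℝ} (hδ : 0 < δ) (k : ℕ) (u : ℝ) :
    gRadial δ k u = sqrtGammaPDFReal (δ / 2 + k) (1 / 2) u := by
  unfold gRadial sqrtGammaPDFReal
  split_ifs with hu
  · set s := δ / 2 + k
    have hα : δ - 1 + 2 * (k : ℝ) = 2 * s - 1 := by ring
    have hs : 0 < s := by positivity
    have hconst : 2 / √(2 * Real.pi) / gaussAbsMoment (2 * s - 1)
        = 2 * (1 / 2) ^ s / Real.Gamma s := by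
      have hpow : (2 : ℝ) ^ ((2 * s - 1) / 2) * √2 = 2 ^ s := by
        rw [Real.sqrt_eq_rpow, ← Real.rpow_add two_pos]
        ring_nf
      rw [gaussAbsMoment_eq (by linarith), Real.sqrt_mul two_pos.le, one_div,
        Real.inv_rpow two_pos.le, ← hpow, sub_add_cancel, mul_div_cancel_left₀ s two_ne_zero]
      field_simp
    have hsq : u ^ (2 * s - 1) = u * (u ^ 2) ^ (s - 1) := by
      nth_rw 2 [← Real.rpow_one u]
      rw [← Real.rpow_two, ← Real.rpow_mul hu.le, ← Real.rpow_add hu]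
      ring_nf
    rw [hα, mul_div_right_comm, hconst, hsq, gammaPDFReal_of_pos _ _ (pow_pos hu 2)]
    ring_nf
  · rfl

theorem one_div_mul_gRadial_div {δ σ : ℝ} (hδ : 0 < δ) (hσ : 0 < σ) (k : ℕ) (x : ℝ) :
    1 / σ * gRadial δ k (x / σ) = sqrtGammaPDFReal (δ / 2 + k) (1 / 2 / σ ^ 2) x := by
  rw [gRadial_eq_sqrtGammaPDFReal hδ, one_div_mul_sqrtGammaPDFReal_div hσ one_half_pos.le]

theorem radialOUKernel_eq_tsum_poissonWeight {β : ℝ} (hβ : 0 < β) (δ a x x' : ℝ) :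
    radialOUKernel δ a β x x'
      = ∑' n, poissonWeight (a ^ 2 / (2 * β ^ 2) * x ^ 2) n * (1 / β * gRadial δ n (x' / β)) := by
  unfold radialOUKernel gRadial poissonWeight
  simp only [div_pos_iff_of_pos_right hβ]
  split_ifs with hx'
  · rw [← tsum_mul_left]
    refine tsum_congr fun n => ?_
    rw [Real.div_rpow hx'.le hβ.le]
    ring_nf
  · simp

theorem nuRadial_prediction_general (δ a β σ : ℝ) (hδ : 0 < δ) (hβ : 0 < β) (hσ : 0 < σ)
    (i : ℕ) (x' : ℝ) :
    ∫ x in Set.Ioi (0 : ℝ),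
        (1 / σ) * gRadial δ i (x / σ) * radialOUKernel δ a β x x'
      = ∑ k ∈ Finset.range (i + 1),
          (Nat.choose i k : ℝ)
            * (1 - β ^ 2 / Real.sqrt (β ^ 2 + a ^ 2 * σ ^ 2) ^ 2) ^ k
            * (β ^ 2 / Real.sqrt (β ^ 2 + a ^ 2 * σ ^ 2) ^ 2) ^ (i - k)
            * ((1 / Real.sqrt (β ^ 2 + a ^ 2 * σ ^ 2))
                * gRadial δ k (x' / Real.sqrt (β ^ 2 + a ^ 2 * σ ^ 2))) := by
  set τ := Real.sqrt (β ^ 2 + a ^ 2 * σ ^ 2)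
  have hτ : 0 < τ := by positivity
  have hτ_sq : τ ^ 2 = β ^ 2 + a ^ 2 * σ ^ 2 := Real.sq_sqrt (by positivity)
  have hp : 1 / 2 / σ ^ 2 / (1 / 2 / σ ^ 2 + a ^ 2 / (2 * β ^ 2)) = β ^ 2 / τ ^ 2 := by
    rw [hτ_sq]
    field_simp
  have hrate : β ^ 2 / τ ^ 2 * (1 / 2 / β ^ 2) = 1 / 2 / τ ^ 2 := by field_simp
  have mixture := hasSum_negBinomialWeight_mul_sqrtGammaPDFReal (s := δ / 2)
    (p := β ^ 2 / τ ^ 2) (r := 1 / 2 / β ^ 2) (by positivity) (by positivity) (by positivity) i x'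
  simp only [radialOUKernel_eq_tsum_poissonWeight hβ, one_div_mul_gRadial_div hδ hσ,
    one_div_mul_gRadial_div hδ hβ, one_div_mul_gRadial_div hδ hτ, ← hrate]
  rw [integral_sqrtGammaPDFReal_mul_comp_sq _ _ fun y =>
    ∑' n, poissonWeight (a ^ 2 / (2 * β ^ 2) * y) n *
      sqrtGammaPDFReal (δ / 2 + n) (1 / 2 / β ^ 2) x']
  exact integral_gammaPDFReal_mul_tsum_poissonWeight (by positivity) (by positivity)
    (by positivity) (hp ▸ mixture)

/-- Prediction step: with `τ² = β² + a²σ²`,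
`∫₀^∞ (1/σ) g_i^{(δ)}(x/σ) p^{(δ)}(x,x') dx
  = ∑_{k=0}^i binom(i,k)(1−β²/τ²)^k (β²/τ²)^{i−k} (1/τ) g_k^{(δ)}(x'/τ)`. -/
theorem nuRadial_prediction (δ a β σ : ℝ) (hδ : 1 ≤ δ) (hβ : 0 < β) (hσ : 0 < σ)
    (i : ℕ) (x' : ℝ) (hx' : 0 < x') :
    ∫ x in Set.Ioi (0 : ℝ),
        (1 / σ) * gRadial δ i (x / σ) * radialOUKernel δ a β x x'
      = ∑ k ∈ Finset.range (i + 1),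
          (Nat.choose i k : ℝ)
            * (1 - β ^ 2 / Real.sqrt (β ^ 2 + a ^ 2 * σ ^ 2) ^ 2) ^ k
            * (β ^ 2 / Real.sqrt (β ^ 2 + a ^ 2 * σ ^ 2) ^ 2) ^ (i - k)
            * ((1 / Real.sqrt (β ^ 2 + a ^ 2 * σ ^ 2))
                * gRadial δ k (x' / Real.sqrt (β ^ 2 + a ^ 2 * σ ^ 2))) :=
  nuRadial_prediction_general δ a β σ (one_pos.trans_le hδ) hβ hσ i x'
end

section
/- Let δ ≥ 1 be real, 0 < a < 1, β > 0, and set ρ² = β²/(1 − a²). Define π^{(δ)}(x) = 1_{(x>0)} (2/(ρ√(2π))) e^{−x²/(2ρ²)} x^{δ−1}/(ρ^{δ−1} C_{δ−1}), and define the transition density p^{(δ)}(x, x') = 1_{(x'>0)} (2/(β√(2π))) e^{−x'²/(2β²)} Σ_{k=0}^{∞} α_k(x) x'^{δ−1+2k}/(C_{δ−1+2k} β^{δ−1+2k}), with α_k(x) = e^{−a²x²/(2β²)} (a²x²/(2β²))^k/k!, where C_α = ∫_ℝ |v|^α (2π)^{−1/2} e^{−v²/2} dv. Then π^{(δ)}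 is a stationary density for p^{(δ)}: for every x' > 0, ∫_0^∞ π^{(δ)}(x) p^{(δ)}(x, x') dx = π^{(δ)}(x'). -/
open MeasureTheory

/-- The stationary density of the sampled radial Ornstein–Uhlenbeck process,
`π^{(δ)}(x) = 1_{(x>0)} (2/(ρ√(2π))) e^{−x²/(2ρ²)} x^{δ−1}/(ρ^{δ−1} C_{δ−1})`. -/
noncomputable def radialOUStationary (δ ρ : ℝ) (x : ℝ) : ℝ :=
  if 0 < x then
    2 / (ρ * Real.sqrt (2 * Real.pi)) * Real.exp (-x ^ 2 / (2 * ρ ^ 2))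
      * x ^ (δ - 1) / (ρ ^ (δ - 1) * gaussAbsMoment (δ - 1))
  else 0

/-!
The density `p(x, ·)` is the mixture of the densities `π^{(δ+2k)}` of scale `β` with Poisson weights
of rate `a²x²/(2β²)`, hence it has total mass one. The relation `a²ρ² + β² = ρ²` (stationarity of
the variance of `X' = aX + βZ`) also reads `1/ρ² + a²/β² = 1/β²`, which makes each term of
`π(x) p(x, y)` symmetric in `x` and `y`: the chain is reversible, and integrating
`π(x) p(x, y) = π(y) p(y, x)` over `x` gives stationarity.
-/

open Real Set ProbabilityTheory

theorem integral_tsum_mul_of_integral_eq_one {α ι : Type*} [MeasurableSpace α] [Countable ι]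
    {μ : Measure α} {w : ι → ℝ} {f : ι → α → ℝ} (hw : Summable w) (hf : ∀ i, 0 ≤ᵐ[μ] f i)
    (hf_one : ∀ i, ∫ x, f i x ∂μ = 1) :
    ∫ x, ∑' i, w i * f i x ∂μ = ∑' i, w i := by
  have hf_int (i : ι) : Integrable (f i) μ :=
    .of_integral_ne_zero (by rw [hf_one]; exact one_ne_zero)
  have integral_norm (i : ι) : ∫ x, ‖w i * f i x‖ ∂μ = |w i| := by
    calc ∫ x, ‖w i * f i x‖ ∂μ = ∫ x, |w i| * f i x ∂μ := by
          refine integral_congr_ae ((hf i).mono fun x hx => ?_)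
          simp only [norm_mul, norm_eq_abs, abs_of_nonneg hx]
      _ = |w i| := by rw [integral_const_mul, hf_one, mul_one]
  rw [← integral_tsum_of_summable_integral_norm (fun i => (hf_int i).const_mul (w i))
    (by simpa only [integral_norm] using hw.abs)]
  simp only [integral_const_mul, hf_one, mul_one]

theorem gaussAbsMoment_eq_integral_Ioi (q : ℝ) :
    gaussAbsMoment q = 2 / √(2 * π) * ∫ v in Ioi 0, v ^ q * exp (-v ^ 2 / 2) := by
  have h := integral_comp_abs (f := fun v => v ^ q * (√(2 * π))⁻¹ * exp (-v ^ 2 / 2))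
  simp only [sq_abs] at h
  rw [gaussAbsMoment, h, div_eq_mul_inv, mul_assoc, ← integral_const_mul (√(2 * π))⁻¹]
  simp only [mul_left_comm, mul_assoc]

theorem gaussAbsMoment_nonneg (q : ℝ) : 0 ≤ gaussAbsMoment q :=
  integral_nonneg fun v => by positivity

theorem gaussAbsMoment_pos {q : ℝ} (hq : -1 < q) : 0 < gaussAbsMoment q := by
  have hΓ : 0 < Gamma ((q + 1) / 2) := Gamma_pos_of_pos (by linarith)
  have h := integral_rpow_mul_exp_neg_mul_rpow two_pos hq (half_pos one_pos)
  simp only [rpow_two, neg_mul, one_div_mul_eq_div, ← neg_div (2 : ℝ) (_ ^ 2)] at h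
  rw [gaussAbsMoment_eq_integral_Ioi, h]
  positivity

theorem radialOUStationary_nonneg (δ : ℝ) {ρ : ℝ} (hρ : 0 ≤ ρ) (x : ℝ) :
    0 ≤ radialOUStationary δ ρ x := by
  have := gaussAbsMoment_nonneg (δ - 1)
  unfold radialOUStationary
  split_ifs <;> positivity

theorem radialOUStationary_mul_left (δ : ℝ) {ρ : ℝ} (hρ : 0 < ρ) (v : ℝ) :
    radialOUStationary δ ρ (ρ * v) = ρ⁻¹ * radialOUStationary δ 1 v := by
  rcases le_or_gt v 0 with hv | hv
  · simp [radialOUStationary, hv.not_gt, mul_pos_iff_of_pos_left hρ]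
  · have hexp : -(ρ * v) ^ 2 / (2 * ρ ^ 2) = -v ^ 2 / 2 := by field_simp
    simp only [radialOUStationary, if_pos hv, if_pos (mul_pos hρ hv), hexp, one_pow, mul_one,
      one_mul, one_rpow, mul_rpow hρ.le hv.le]
    field_simp

theorem integral_radialOUStationary {δ ρ : ℝ} (hδ : 0 < δ) (hρ : 0 < ρ) :
    ∫ x in Ioi 0, radialOUStationary δ ρ x = 1 := by
  have hC : gaussAbsMoment (δ - 1) ≠ 0 := (gaussAbsMoment_pos (by linarith)).ne'
  calc ∫ x in Ioi 0, radialOUStationary δ ρ x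
      = ρ * ∫ v in Ioi 0, radialOUStationary δ ρ (ρ * v) := by
        simpa using (integral_comp_mul_left_Ioi' (radialOUStationary δ ρ) 0 hρ).symm
    _ = ∫ v in Ioi 0, radialOUStationary δ 1 v := by
        simp only [radialOUStationary_mul_left δ hρ, integral_const_mul,
          mul_inv_cancel_left₀ hρ.ne']
    _ = ∫ v in Ioi 0, 2 / √(2 * π) / gaussAbsMoment (δ - 1)
          * (v ^ (δ - 1) * exp (-v ^ 2 / 2)) := by
        refine setIntegral_congr_fun measurableSet_Ioi fun v hv => ?_
        simp only [radialOUStationary, if_pos (mem_Ioi.1 hv), one_mul, one_pow, mul_one, one_rpow]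
        ring
    _ = 1 := by
        rw [integral_const_mul, div_mul_eq_mul_div, ← gaussAbsMoment_eq_integral_Ioi,
          div_self hC]

theorem radialOUKernel_eq_tsum_poisson (δ a β x y : ℝ) :
    radialOUKernel δ a β x y =
      ∑' k : ℕ, (poissonMeasure (a ^ 2 * x ^ 2 / (2 * β ^ 2)).toNNReal).real {k}
        * radialOUStationary (δ + 2 * k) β y := by
  have hrate : 0 ≤ a ^ 2 * x ^ 2 / (2 * β ^ 2) := by positivity
  unfold radialOUKernel radialOUStationary
  split_ifs
  · rw [← tsum_mul_left]
    refine tsum_congr fun k => ?_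
    rw [poissonMeasure_real_singleton, coe_toNNReal _ hrate, add_sub_right_comm, ← neg_div]
    ring
  · simp only [mul_zero, tsum_zero]

theorem integral_radialOUKernel {δ β : ℝ} (hδ : 0 < δ) (hβ : 0 < β) (a x : ℝ) :
    ∫ y in Ioi 0, radialOUKernel δ a β x y = 1 := by
  have hweights := hasSum_one_poissonMeasure (a ^ 2 * x ^ 2 / (2 * β ^ 2)).toNNReal
  simp only [← poissonMeasure_real_singleton] at hweights
  simp only [radialOUKernel_eq_tsum_poisson]
  rw [integral_tsum_mul_of_integral_eq_one hweights.summable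
    (fun k => .of_forall (radialOUStationary_nonneg _ hβ.le))
    (fun k => integral_radialOUStationary (by positivity) hβ), hweights.tsum_eq]

section DetailedBalance

variable {a β ρ : ℝ}

theorem exp_neg_sq_div_mul_exp_neg (hβ : β ≠ 0) (hvar : a ^ 2 * ρ ^ 2 + β ^ 2 = ρ ^ 2) (x : ℝ) :
    exp (-x ^ 2 / (2 * ρ ^ 2)) * exp (-(a ^ 2 * x ^ 2 / (2 * β ^ 2))) =
      exp (-x ^ 2 / (2 * β ^ 2)) := by
  have hρ : ρ ≠ 0 := by
    rintro rfl
    simp [hβ] at hvar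
  rw [← exp_add]
  congr 1
  field_simp
  linear_combination -x ^ 2 * hvar

theorem radialOUStationary_mul_poisson_mul_radialOUStationary (δ : ℝ) (hβ : β ≠ 0)
    (hvar : a ^ 2 * ρ ^ 2 + β ^ 2 = ρ ^ 2) {x y : ℝ} (hx : 0 < x) (hy : 0 < y) (k : ℕ) :
    radialOUStationary δ ρ x
        * ((poissonMeasure (a ^ 2 * x ^ 2 / (2 * β ^ 2)).toNNReal).real {k}
          * radialOUStationary (δ + 2 * k) β y) =
      4 / (√(2 * π) ^ 2 * ρ * β * ρ ^ (δ - 1) * β ^ (δ + 2 * k - 1) * k.factorial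
          * gaussAbsMoment (δ - 1) * gaussAbsMoment (δ + 2 * k - 1))
        * exp (-x ^ 2 / (2 * β ^ 2)) * exp (-y ^ 2 / (2 * β ^ 2))
        * (x * y) ^ (δ - 1) * ((a * x * y) ^ 2 / (2 * β ^ 2)) ^ k := by
  have hrate : 0 ≤ a ^ 2 * x ^ 2 / (2 * β ^ 2) := by positivity
  have hy_rpow : y ^ (δ + 2 * k - 1) = y ^ (δ - 1) * (y ^ 2) ^ k := by
    rw [add_sub_right_comm, rpow_add hy, ← pow_mul, ← rpow_natCast]
    push_cast
    rfl
  rw [poissonMeasure_real_singleton, coe_toNNReal _ hrate, radialOUStationary, if_pos hx,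
    radialOUStationary, if_pos hy, hy_rpow, mul_rpow hx.le hy.le,
    ← exp_neg_sq_div_mul_exp_neg hβ hvar x]
  ring

theorem radialOU_detailed_balance (δ : ℝ) (hβ : β ≠ 0) (hvar : a ^ 2 * ρ ^ 2 + β ^ 2 = ρ ^ 2)
    (x y : ℝ) :
    radialOUStationary δ ρ x * radialOUKernel δ a β x y =
      radialOUStationary δ ρ y * radialOUKernel δ a β y x := by
  rcases le_or_gt x 0 with hx | hx
  · simp [radialOUStationary, radialOUKernel, hx.not_gt]
  rcases le_or_gt y 0 with hy | hy
  · simp [radialOUStationary, radialOUKernel, hy.not_gt]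
  simp only [radialOUKernel_eq_tsum_poisson, ← tsum_mul_left,
    radialOUStationary_mul_poisson_mul_radialOUStationary δ hβ hvar hx hy,
    radialOUStationary_mul_poisson_mul_radialOUStationary δ hβ hvar hy hx]
  refine tsum_congr fun k => ?_
  rw [mul_comm x y]
  ring

end DetailedBalance

theorem radialOU_stationary_density_general {δ a β : ℝ} (hδ : 0 < δ) (ha : |a| < 1)
    (hβ : 0 < β) (x' : ℝ) :
    ∫ x in Ioi 0,
        radialOUStationary δ (√(β ^ 2 / (1 - a ^ 2))) x * radialOUKernel δ a β x x'
      = radialOUStationary δ (√(β ^ 2 / (1 - a ^ 2))) x' := by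
  have ha_sq : 0 < 1 - a ^ 2 := sub_pos.2 ((sq_lt_one_iff_abs_lt_one a).2 ha)
  have hvar : a ^ 2 * √(β ^ 2 / (1 - a ^ 2)) ^ 2 + β ^ 2 = √(β ^ 2 / (1 - a ^ 2)) ^ 2 := by
    rw [sq_sqrt (by positivity)]
    field_simp
    ring
  simp only [radialOU_detailed_balance δ hβ.ne' hvar _ x', integral_const_mul,
    integral_radialOUKernel hδ hβ, mul_one]

/-- With `ρ² = β²/(1 − a²)`, `π^{(δ)}` is a stationary density for `p^{(δ)}`:
for every `x' > 0`, `∫₀^∞ π^{(δ)}(x) p^{(δ)}(x,x') dx = π^{(δ)}(x')`. -/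
theorem radialOU_stationary_density (δ a β : ℝ) (hδ : 1 ≤ δ)
    (ha0 : 0 < a) (ha1 : a < 1) (hβ : 0 < β) (x' : ℝ) (hx' : 0 < x') :
    ∫ x in Set.Ioi (0 : ℝ),
        radialOUStationary δ (Real.sqrt (β ^ 2 / (1 - a ^ 2))) x
          * radialOUKernel δ a β x x'
      = radialOUStationary δ (Real.sqrt (β ^ 2 / (1 - a ^ 2))) x' :=
  radialOU_stationary_density_general (zero_lt_one.trans_le hδ)
    (abs_lt.2 ⟨by linarith, ha1⟩) hβ x'
end
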